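/- Let 𝒞 be a set of non-decreasing functions from [0,1] to [0,1] such that there exist g, h ∈ 𝒞 and real numbers 0 ≤ x₁ < x₂ ≤ 1 with g(x₁) < h(x₁) and g(x₂) > h(x₂). For natural numbers m, n and matrices Π^{sb}, Π^{db} : Fin m × Fin n → [0,1], let the observed data be a pair (Y, X) of Boolean matrices whose entries are all mutually independent with Y_{ij} ~ Bernoulli(Π^{sb}_{ij}) and X_{ij} ~ Bernoulli(Π^{db}_{ij}). A family of tests is a family ψ_{m,n} of functions from such data pairs to Bool (reject = true). Say the family controls Type-I error at level α ∈ (0,1) if for all m, n, all subsets 𝒥 ⊆ Fin n, and all matrices Π^{sb}, Π^{db} with Π^{sb}_{ij} = f₀(Π^{db}_{ij}) for all (i,j) for some f₀ ∈ 𝒞, the rejection probability of ψ_{m,n} is at most α. Say the family has non-trivial power if for every ε > 0 and δ > 0 there exists n₀ such that for all m, n, all 𝒥 ⊆ Fin n with min(|𝒥|, |𝒥ᶜ|) > n₀, and all matrices Π^{sb}, Π^{db} for which there exists f₀ ∈ 𝒞 with Π^{sb}_{ij} ≥ f₀(Π^{db}_{ij}) + δ for all i ∈ Fin m, j ∈ 𝒥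 and Π^{sb}_{ij} ≤ f₀(Π^{db}_{ij}) − δ for all i ∈ Fin m, j ∉ 𝒥, the rejection probability of ψ_{m,n} is at least 1 − ε. Then no family of tests can simultaneously control Type-I error at some level α ∈ (0,1) and have non-trivial power. -/

import Mathlib

/-!
A single instance is both a null instance for `h` and an alternative instance for `g`. Give every
paper in `J` the double-blind probability `x₁`, every other paper `x₂`, and let the single-blind
probabilities be their images under `h`. The null hypothesis holds with `f₀ = h`. Since `h` exceeds
`g` at `x₁` and falls below it at `x₂`, the alternative holds with `f₀ = g` and margin
`δ = min (h x₁ - g x₁) (g x₂ - h x₂)`. The rejection probability would have to be at most `α` and at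
least `1 - ε`, which is impossible for `ε = (1 - α) / 2`. The margin does not depend on the size of
the problem, so `J` and its complement can be taken as large as required.
-/

open Finset

/-- Probability of observing the Boolean matrix `Y` when each entry `Y ij` is an independent
Bernoulli random variable with success probability `Pmat ij`. -/
noncomputable def bernWeight {m n : ℕ} (Pmat : Fin m × Fin n → ℝ)
    (Y : Fin m × Fin n → Bool) : ℝ :=
  ∏ ij : Fin m × Fin n, (if Y ij then Pmat ij else 1 - Pmat ij)

/-- Rejection probability of a test `ψ` (reject = `true`) on data `(Y, X)` whose entries are
all mutually independent with `Y_{ij} ~ Bernoulli(Psb_{ij})` and `X_{ij} ~ Bernoulli(Pdb_{ij})`. -/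
noncomputable def rejProb {m n : ℕ}
    (ψ : ((Fin m × Fin n → Bool) × (Fin m × Fin n → Bool)) → Bool)
    (Psb Pdb : Fin m × Fin n → ℝ) : ℝ :=
  ∑ d : (Fin m × Fin n → Bool) × (Fin m × Fin n → Bool),
    bernWeight Psb d.1 * bernWeight Pdb d.2 * (if ψ d then 1 else 0)

/-- For every `N` some `Fin n` splits into two parts that both have more than `N` elements. -/
lemma exists_finset_lt_card_compl (N : ℕ) :
    ∃ (n : ℕ) (J : Finset (Fin n)), N < J.card ∧ N < Jᶜ.card := by
  obtain ⟨J, -, hJ⟩ := Finset.exists_subset_card_eq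
    (s := (Finset.univ : Finset (Fin (2 * (N + 1))))) (n := N + 1) (by simp)
  refine ⟨_, J, by omega, ?_⟩
  rw [Finset.card_compl, Fintype.card_fin]
  omega

/-- Theorem 3: if the class `𝒞` of non-decreasing functions from `[0,1]` to
`[0,1]` contains two functions `g, h` that cross (`g x₁ < h x₁` and `g x₂ > h x₂` for some
`0 ≤ x₁ < x₂ ≤ 1`), then no family of tests controlling the Type-I error at some level
`α ∈ (0,1)` over all null instances `Psb = f₀ ∘ Pdb`, `f₀ ∈ 𝒞`, can have non-trivial power. -/
theorem stmt_12 (𝒞 : Set (ℝ → ℝ))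
    (h𝒞mono : ∀ f ∈ 𝒞, MonotoneOn f (Set.Icc 0 1))
    (h𝒞maps : ∀ f ∈ 𝒞, Set.MapsTo f (Set.Icc 0 1) (Set.Icc 0 1))
    (g h : ℝ → ℝ) (hg : g ∈ 𝒞) (hh : h ∈ 𝒞)
    (x₁ x₂ : ℝ) (hx₁ : 0 ≤ x₁) (hx₁₂ : x₁ < x₂) (hx₂ : x₂ ≤ 1)
    (hcross₁ : g x₁ < h x₁) (hcross₂ : g x₂ > h x₂)
    (ψ : ∀ m n : ℕ, ((Fin m × Fin n → Bool) × (Fin m × Fin n → Bool)) → Bool)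
    (α : ℝ) (hα : α ∈ Set.Ioo (0 : ℝ) 1)
    -- Type-I error control at level α over the class 𝒞 :
    (hTypeI : ∀ (m n : ℕ) (_J : Finset (Fin n)) (Psb Pdb : Fin m × Fin n → ℝ),
      (∀ ij, Psb ij ∈ Set.Icc (0 : ℝ) 1) → (∀ ij, Pdb ij ∈ Set.Icc (0 : ℝ) 1) →
      (∃ f₀ ∈ 𝒞, ∀ ij, Psb ij = f₀ (Pdb ij)) →
      rejProb (ψ m n) Psb Pdb ≤ α) :
    -- then the family cannot have non-trivial power:
    ¬ (∀ ε > (0 : ℝ), ∀ δ > (0 : ℝ), ∃ n₀ : ℕ, ∀ (m n : ℕ) (J : Finset (Fin n)),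
        n₀ < J.card → n₀ < Jᶜ.card →
        ∀ (Psb Pdb : Fin m × Fin n → ℝ),
          (∀ ij, Psb ij ∈ Set.Icc (0 : ℝ) 1) → (∀ ij, Pdb ij ∈ Set.Icc (0 : ℝ) 1) →
          (∃ f₀ ∈ 𝒞, (∀ (i : Fin m), ∀ j ∈ J, f₀ (Pdb (i, j)) + δ ≤ Psb (i, j)) ∧
            (∀ (i : Fin m), ∀ j ∉ J, Psb (i, j) ≤ f₀ (Pdb (i, j)) - δ)) →
          1 - ε ≤ rejProb (ψ m n) Psb Pdb) := by
  intro hpow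
  obtain ⟨hα0, hα1⟩ := hα
  obtain ⟨N, hN⟩ := hpow ((1 - α) / 2) (by linarith) (min (h x₁ - g x₁) (g x₂ - h x₂))
    (lt_min (by linarith) (by linarith))
  obtain ⟨n, J, hJ, hJc⟩ := exists_finset_lt_card_compl N
  -- One reviewer suffices. With no reviewers the null and the alternative would both hold vacuously,
  -- so `m = 1` is the smallest case in which the crossing of `g` and `h` matters.
  let Pdb : Fin 1 × Fin n → ℝ := fun ij => if ij.2 ∈ J then x₁ else x₂
  have hdb : ∀ ij, Pdb ij ∈ Set.Icc (0 : ℝ) 1 := by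
    intro ij
    simp only [Pdb]
    split_ifs
    · exact ⟨hx₁, hx₁₂.le.trans hx₂⟩
    · exact ⟨hx₁.trans hx₁₂.le, hx₂⟩
  have hsb : ∀ ij, h (Pdb ij) ∈ Set.Icc (0 : ℝ) 1 := fun ij => h𝒞maps h hh (hdb ij)
  have hnull := hTypeI 1 n J (fun ij => h (Pdb ij)) Pdb hsb hdb ⟨h, hh, fun _ => rfl⟩
  have halt := hN 1 n J hJ hJc (fun ij => h (Pdb ij)) Pdb hsb hdb ⟨g, hg, by
    intro i j hj
    have := min_le_left (h x₁ - g x₁) (g x₂ - h x₂)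
    simp only [Pdb, if_pos hj]
    linarith, by
    intro i j hj
    have := min_le_right (h x₁ - g x₁) (g x₂ - h x₂)
    simp only [Pdb, if_neg hj]
    linarith⟩
  linarith
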